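/- Let 1 ≤ k ≤ n, let i be an integer with 0 ≤ i ≤ n, and let r_1,…,r_k be integers such that 1 ≤ r_j ≤ n−k+j+1−i for each j = 1,…,k. Let w_i = w_i^n w_{i−1}^{n−1} ⋯ w_1^{n−i+1} ∈ W. Then w_i · w_{r_k}^{n} w_{r_{k−1}}^{n−1} ⋯ w_{r_1}^{n−k+1} = w_{r_k+i}^{n} w_{r_{k−1}+i}^{n−1} ⋯ w_{r_1+i}^{n−k+1} · w_i^{n−k} w_{i−1}^{n−k−1} ⋯ w_1^{n−i+1−k}. -/

import Mathlib

open scoped Pointwise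
open Matrix

noncomputable section

/-- The simple reflection `s_i` (1-based indexing, `1 ≤ i ≤ n`), i.e. the transposition
`(i, i+1)` of `{1, …, n+1}`, as a permutation of `Fin (n+1)`; junk value `1` outside the range. -/
def sRef (n i : ℕ) : Equiv.Perm (Fin (n + 1)) :=
  if h : 1 ≤ i ∧ i ≤ n then Equiv.swap ⟨i - 1, by omega⟩ ⟨i, by omega⟩ else 1

/-- `w_r^{r'} = s_r s_{r+1} ⋯ s_{r'}` (equal to `1` when `r = r' + 1`). -/
def wRR (n r r' : ℕ) : Equiv.Perm (Fin (n + 1)) :=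
  ((List.range' r (r' + 1 - r)).map (sRef n)).prod

/-- The subgroup `W_I` of the Weyl group generated by the `s_i`, `i ∈ I`. -/
def WI (n : ℕ) (I : Finset ℕ) : Subgroup (Equiv.Perm (Fin (n + 1))) :=
  Subgroup.closure (sRef n '' I)

/-- `w_i = w_i^n w_{i-1}^{n-1} ⋯ w_1^{n-i+1}`. -/
def wBig (n i : ℕ) : Equiv.Perm (Fin (n + 1)) :=
  ((List.range i).map fun t => wRR n (i - t) (n - t)).prod

/-- `w_{r_k}^n w_{r_{k-1}}^{n-1} ⋯ w_{r_1}^{n-k+1}` for a tuple `r : Fin k → ℕ`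
(where `r ι` is the paper's `r_{ι+1}`). -/
def wProd (n k : ℕ) (r : Fin k → ℕ) : Equiv.Perm (Fin (n + 1)) :=
  (List.ofFn fun t : Fin k => wRR n (r t.rev) (n - (t : ℕ))).prod

/-- The Coxeter length of `w` with respect to the generators `s_1, …, s_n`. -/
def lenW (n : ℕ) (w : Equiv.Perm (Fin (n + 1))) : ℕ :=
  sInf { d | ∃ f : Fin d → ℕ, (∀ m, f m ∈ Finset.Icc 1 n) ∧
    (List.ofFn fun m => sRef n (f m)).prod = w }

/-! In the braid monoid, moving a generator `s_j` with `a ≤ j < m` leftwards past the ascending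
product `w_a^m` turns it into `s_{j+1}`; hence `w_a^m w_c^p = w_{c+1}^{p+1} w_a^m` when `a ≤ c` and
`p < m`. Write `u_i^m = w_i^m w_{i-1}^{m-1} ⋯ w_1^{m-i+1}`. Splitting `w_r^m = w_r^{m-1} s_m`,
shifting `w_{r+i-1}^{m-1}` past the factor `w_i^m` and cancelling `s_m^2 = 1` gives, by induction on
`i`, the one-factor identity `u_i^m w_r^m = w_{r+i}^m u_i^{m-1}`. Moving the factors of
`w_{r_k}^n ⋯ w_{r_1}^{n-k+1}` past `u_i^n` one after the other then lowers the upper index of `u_i`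
by one each time. -/

section BraidMonoid

variable {M : Type*} [Monoid M]

/-- The defining relations of Artin's braid monoid with generators `s 1, …, s n`. Other values of
`s` are unconstrained. -/
structure BraidRelations (s : ℕ → M) (n : ℕ) : Prop where
  commute : ∀ a b, 1 ≤ a → a + 2 ≤ b → b ≤ n → Commute (s a) (s b)
  braid : ∀ a, 1 ≤ a → a + 1 ≤ n → s a * s (a + 1) * s a = s (a + 1) * s a * s (a + 1)

/-- The ascending product `w_a^b = s_a s_{a+1} ⋯ s_b`, which is `wRR` for an arbitrary family `s`;
it is `1` when `b < a`. -/
def ascendingProd (s : ℕ → M) (a b : ℕ) : M :=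
  ((List.range' a (b + 1 - a)).map s).prod

/-- The product `w_i^m w_{i-1}^{m-1} ⋯ w_1^{m-i+1}`, which is `wBig` for an arbitrary family `s` and
an arbitrary top index `m`. -/
def staircaseProd (s : ℕ → M) (i m : ℕ) : M :=
  ((List.range i).map fun t => ascendingProd s (i - t) (m - t)).prod

theorem ascendingProd_of_lt (s : ℕ → M) {a b : ℕ} (h : b < a) : ascendingProd s a b = 1 := by
  simp [ascendingProd, Nat.sub_eq_zero_of_le h]

theorem ascendingProd_succ (s : ℕ → M) {a b : ℕ} (h : a ≤ b + 1) :
    ascendingProd s a (b + 1) = ascendingProd s a b * s (b + 1) := by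
  simp [ascendingProd, Nat.succ_sub h, List.range'_concat, Nat.add_sub_cancel' h]

theorem commute_ascendingProd {s : ℕ → M} {x : M} {a b : ℕ}
    (h : ∀ c, a ≤ c → c ≤ b → Commute (s c) x) : Commute (ascendingProd s a b) x := by
  refine Commute.list_prod_left _ _ fun y hy => ?_
  obtain ⟨c, hc, rfl⟩ := List.mem_map.mp hy
  rw [List.mem_range'_1] at hc
  exact h c (by omega) (by omega)

@[simp]
theorem staircaseProd_zero (s : ℕ → M) (m : ℕ) : staircaseProd s 0 m = 1 := rfl

theorem staircaseProd_succ (s : ℕ → M) (i m : ℕ) :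
    staircaseProd s (i + 1) m = ascendingProd s (i + 1) m * staircaseProd s i (m - 1) := by
  simp [staircaseProd, List.range_succ_eq_map, Function.comp_def, Nat.sub_sub, Nat.add_comm 1]

theorem commute_staircaseProd {s : ℕ → M} {x : M} {i m : ℕ}
    (h : ∀ c, 1 ≤ c → c ≤ m → Commute (s c) x) : Commute (staircaseProd s i m) x := by
  refine Commute.list_prod_left _ _ fun y hy => ?_
  obtain ⟨t, ht, rfl⟩ := List.mem_map.mp hy
  rw [List.mem_range] at ht
  exact commute_ascendingProd fun c hc hc' => h c (by omega) (by omega)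

namespace BraidRelations

variable {s : ℕ → M} {n : ℕ}

theorem semiconjBy_ascendingProd (hs : BraidRelations s n) {a j m : ℕ} (ha : 1 ≤ a) (haj : a ≤ j)
    (hjm : j < m) (hm : m ≤ n) : SemiconjBy (ascendingProd s a m) (s j) (s (j + 1)) := by
  induction m, hjm using Nat.le_induction with
  | base =>
    obtain ⟨j, rfl⟩ : ∃ p, j = p + 1 := ⟨j - 1, by omega⟩
    have hbraid : SemiconjBy (s (j + 1) * s (j + 2)) (s (j + 1)) (s (j + 2)) :=
      (hs.braid (j + 1) (by omega) hm).trans (mul_assoc _ _ _)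
    have hcomm : Commute (ascendingProd s a j) (s (j + 2)) :=
      commute_ascendingProd fun c hc hcj => hs.commute c _ (by omega) (by omega) hm
    rw [ascendingProd_succ s (by omega), ascendingProd_succ s haj, mul_assoc]
    exact SemiconjBy.mul_left hcomm hbraid
  | succ m hjm ih =>
    rw [ascendingProd_succ s (by omega)]
    exact (ih (by omega)).mul_left (hs.commute j (m + 1) (by omega) (by omega) hm).symm

theorem semiconjBy_ascendingProd_ascendingProd (hs : BraidRelations s n) {a c p m : ℕ}
    (ha : 1 ≤ a) (hac : a ≤ c) (hpm : p < m) (hm : m ≤ n) :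
    SemiconjBy (ascendingProd s a m) (ascendingProd s c p) (ascendingProd s (c + 1) (p + 1)) := by
  have hempty : ∀ p < c, SemiconjBy (ascendingProd s a m) (ascendingProd s c p)
      (ascendingProd s (c + 1) (p + 1)) := fun p hpc => by
    rw [ascendingProd_of_lt s hpc, ascendingProd_of_lt s (Nat.succ_lt_succ hpc)]
    exact SemiconjBy.one_right _
  induction p with
  | zero => exact hempty 0 (by omega)
  | succ p ih =>
    rcases lt_or_ge (p + 1) c with hpc | hcp
    · exact hempty (p + 1) hpc
    · rw [ascendingProd_succ s hcp, ascendingProd_succ s (by omega)]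
      exact (ih (by omega)).mul_right (hs.semiconjBy_ascendingProd ha (by omega) hpm hm)

theorem staircaseProd_mul_ascendingProd (hs : BraidRelations s n)
    (hsq : ∀ a, 1 ≤ a → a ≤ n → s a * s a = 1) {i m r : ℕ} (hm : m ≤ n) (hr : 1 ≤ r)
    (hri : r + i ≤ m + 1) :
    staircaseProd s i m * ascendingProd s r m =
      ascendingProd s (r + i) m * staircaseProd s i (m - 1) := by
  induction i generalizing m with
  | zero => simp
  | succ i ih =>
    obtain ⟨m, rfl⟩ : ∃ p, m = p + 1 := ⟨m - 1, by omega⟩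
    have hshift : ascendingProd s (i + 1) (m + 1) * ascendingProd s (r + i) m =
        ascendingProd s (r + i + 1) (m + 1) * ascendingProd s (i + 1) (m + 1) :=
      hs.semiconjBy_ascendingProd_ascendingProd (by omega) (by omega) (by omega) hm
    have hcomm : staircaseProd s i (m - 1) * s (m + 1) = s (m + 1) * staircaseProd s i (m - 1) :=
      commute_staircaseProd fun c hc hcm => hs.commute c _ hc (by omega) hm
    have hcancel : ascendingProd s (i + 1) (m + 1) * s (m + 1) = ascendingProd s (i + 1) m := by
      rw [ascendingProd_succ s (by omega), mul_assoc, hsq _ (by omega) hm, mul_one]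
    rw [staircaseProd_succ, staircaseProd_succ, Nat.add_sub_cancel, ← add_assoc]
    calc ascendingProd s (i + 1) (m + 1) * staircaseProd s i m * ascendingProd s r (m + 1)
      _ = ascendingProd s (i + 1) (m + 1) * (staircaseProd s i m * ascendingProd s r m) *
            s (m + 1) := by
          rw [ascendingProd_succ s (by omega : r ≤ m + 1)]; simp only [mul_assoc]
      _ = ascendingProd s (i + 1) (m + 1) * ascendingProd s (r + i) m *
            (staircaseProd s i (m - 1) * s (m + 1)) := by
          rw [ih (by omega) (by omega)]; simp only [mul_assoc]
      _ = ascendingProd s (r + i + 1) (m + 1) *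
            (ascendingProd s (i + 1) (m + 1) * s (m + 1)) * staircaseProd s i (m - 1) := by
          rw [hshift, hcomm]; simp only [mul_assoc]
      _ = ascendingProd s (r + i + 1) (m + 1) *
            (ascendingProd s (i + 1) m * staircaseProd s i (m - 1)) := by
          rw [hcancel, mul_assoc]

end BraidRelations

-- `a t` is the paper's `r_{k-t}`. The additive form of the bound forces `t ≤ n`, so `n - t` is
-- never truncated.
theorem stmt14_general {s : ℕ → M} {n k i : ℕ} (hs : BraidRelations s n)
    (hsq : ∀ a, 1 ≤ a → a ≤ n → s a * s a = 1) (a : Fin k → ℕ)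
    (ha : ∀ t : Fin k, 1 ≤ a t ∧ a t + i + t ≤ n + 1) :
    staircaseProd s i n * (List.ofFn fun t : Fin k => ascendingProd s (a t) (n - t)).prod =
      (List.ofFn fun t : Fin k => ascendingProd s (a t + i) (n - t)).prod *
        staircaseProd s i (n - k) := by
  induction k with
  | zero => simp
  | succ k ih =>
    obtain ⟨hpos, hle⟩ := ha (Fin.last k)
    rw [Fin.val_last] at hle
    have hlast := hs.staircaseProd_mul_ascendingProd hsq (Nat.sub_le n k) hpos
      (by omega : a (Fin.last k) + i ≤ n - k + 1)
    simp only [List.ofFn_succ_last, List.prod_append, List.prod_singleton, Fin.val_last,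
      Fin.val_castSucc]
    rw [← mul_assoc, ih (fun t => a t.castSucc) fun t => ha t.castSucc, mul_assoc, hlast,
      mul_assoc, Nat.sub_sub]

end BraidMonoid

theorem swap_braid {α : Type*} [DecidableEq α] {a b c : α} (hab : a ≠ b) (hbc : b ≠ c)
    (hac : a ≠ c) :
    Equiv.swap a b * Equiv.swap b c * Equiv.swap a b =
      Equiv.swap b c * Equiv.swap a b * Equiv.swap b c := by
  rw [Equiv.swap_mul_swap_mul_swap hab hac, Equiv.swap_comm a b, Equiv.swap_comm b c,
    Equiv.swap_mul_swap_mul_swap hbc.symm hac.symm, Equiv.swap_comm]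

theorem sRef_mul_self (n a : ℕ) : sRef n a * sRef n a = 1 := by
  unfold sRef
  split_ifs <;> simp

theorem braidRelations_sRef (n : ℕ) : BraidRelations (sRef n) n where
  commute a b ha hab hb := by
    rw [sRef, sRef, dif_pos ⟨ha, by omega⟩, dif_pos ⟨by omega, hb⟩]
    refine (Equiv.Perm.disjoint_swap_swap ?_).commute
    simp only [List.nodup_cons, List.mem_cons, List.not_mem_nil, Fin.mk.injEq, or_false,
      not_false_eq_true, List.nodup_nil, and_true]
    omega
  braid a ha han := by
    simp only [sRef, dif_pos (⟨ha, by omega⟩ : 1 ≤ a ∧ a ≤ n),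
      dif_pos (⟨by omega, han⟩ : 1 ≤ a + 1 ∧ a + 1 ≤ n), Nat.add_sub_cancel]
    apply swap_braid <;> simp only [ne_eq, Fin.mk.injEq] <;> omega

/-- Let `1 ≤ k ≤ n`, `0 ≤ i ≤ n`, and let `r_1, …, r_k` (here `r_j = r ⟨j-1⟩`)
be integers with `1 ≤ r_j ≤ n-k+j+1-i`. With `w_i = w_i^n w_{i-1}^{n-1} ⋯ w_1^{n-i+1}` one has
`w_i · w_{r_k}^n ⋯ w_{r_1}^{n-k+1} = w_{r_k+i}^n ⋯ w_{r_1+i}^{n-k+1} · w_i^{n-k} w_{i-1}^{n-k-1} ⋯ w_1^{n-i+1-k}`. -/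
theorem stmt14 (n k i : ℕ) (hn : 1 ≤ n) (hk1 : 1 ≤ k) (hkn : k ≤ n) (hi : i ≤ n)
    (r : Fin k → ℕ) (hr : ∀ j : Fin k, 1 ≤ r j ∧ r j + i ≤ n - k + (j : ℕ) + 2) :
    wBig n i * wProd n k r =
      wProd n k (fun j => r j + i) *
        ((List.range i).map fun t => wRR n (i - t) (n - k - t)).prod := by
  refine stmt14_general (braidRelations_sRef n) (fun a _ _ => sRef_mul_self n a)
    (fun t => r t.rev) fun t => ?_
  have ht := hr t.rev
  rw [Fin.val_rev] at ht
  omega
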